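/- Let p ≡ 3 (mod 4) be a prime. Then the sum over k from 0 to p^2-1 of ((1/2)_k)^3/(k!)^3 is congruent to p^2 · ∏_{k=1}^{(p^2-1)/2} (4k-1)/(4k+1) modulo p^4 (i.e., the difference has p-adic valuation at least 4). -/

import Mathlib

open Finset

/-- The rising factorial (Pochhammer symbol) `(a)_k = a(a+1)⋯(a+k-1)` for `a : ℚ`. -/
def risingFactorial (a : ℚ) (k : ℕ) : ℚ := ∏ i ∈ Finset.range k, (a + i)

/-- `x` lies in `p^r ℤ_(p)`. -/
def PI (p r : ℕ) (x : ℚ) : Prop := ∃ a b : ℤ, ¬ ((p : ℤ) ∣ b) ∧ x * (b : ℚ) = (p : ℚ) ^ r * (a : ℚ)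

section basics
variable {p : ℕ} (hp : p.Prime)

lemma PI.zero (hp : p.Prime) (r : ℕ) : PI p r 0 :=
  ⟨0, 1, by
    intro h
    have := Int.natCast_dvd_natCast.mp (by simpa using h : ((p : ℕ) : ℤ) ∣ ((1 : ℕ) : ℤ))
    exact hp.one_lt.ne' (Nat.dvd_one.mp this), by simp⟩

lemma PI.int (hp : p.Prime) (z : ℤ) : PI p 0 z :=
  ⟨z, 1, by
    intro h
    have := Int.natCast_dvd_natCast.mp (by simpa using h : ((p : ℕ) : ℤ) ∣ ((1 : ℕ) : ℤ))
    exact hp.one_lt.ne' (Nat.dvd_one.mp this), by simp⟩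

lemma PI.one (hp : p.Prime) : PI p 0 1 := by simpa using PI.int hp 1

lemma PI.nat (hp : p.Prime) (z : ℕ) : PI p 0 z := by simpa using PI.int hp z

lemma not_dvd_mul (hp : p.Prime) {b d : ℤ} (hb : ¬ (p : ℤ) ∣ b) (hd : ¬ (p : ℤ) ∣ d) :
    ¬ (p : ℤ) ∣ b * d := by
  intro h
  rcases (Nat.prime_iff_prime_int.mp hp).dvd_or_dvd h with h | h
  exacts [hb h, hd h]

lemma PI.add (hp : p.Prime) {r : ℕ} {x y : ℚ} (hx : PI p r x) (hy : PI p r y) :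
    PI p r (x + y) := by
  obtain ⟨a, b, hb, h1⟩ := hx
  obtain ⟨c, d, hd, h2⟩ := hy
  refine ⟨a * d + c * b, b * d, not_dvd_mul hp hb hd, ?_⟩
  push_cast
  linear_combination (d : ℚ) * h1 + (b : ℚ) * h2

lemma PI.neg {r : ℕ} {x : ℚ} (hx : PI p r x) : PI p r (-x) := by
  obtain ⟨a, b, hb, h1⟩ := hx
  refine ⟨-a, b, hb, ?_⟩
  push_cast
  linear_combination -h1

lemma PI.sub (hp : p.Prime) {r : ℕ} {x y : ℚ} (hx : PI p r x) (hy : PI p r y) :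
    PI p r (x - y) := by
  rw [sub_eq_add_neg]; exact hx.add hp hy.neg

lemma PI.mul (hp : p.Prime) {r s : ℕ} {x y : ℚ} (hx : PI p r x) (hy : PI p s y) :
    PI p (r + s) (x * y) := by
  obtain ⟨a, b, hb, h1⟩ := hx
  obtain ⟨c, d, hd, h2⟩ := hy
  refine ⟨a * c, b * d, not_dvd_mul hp hb hd, ?_⟩
  push_cast
  rw [pow_add]
  linear_combination (y * d : ℚ) * h1 + ((p : ℚ) ^ r * a : ℚ) * h2

lemma PI.mono {r s : ℕ} {x : ℚ} (hx : PI p r x) (h : s ≤ r) : PI p s x := by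
  obtain ⟨a, b, hb, h1⟩ := hx
  obtain ⟨t, rfl⟩ := Nat.exists_eq_add_of_le h
  refine ⟨p ^ t * a, b, hb, ?_⟩
  rw [h1]; push_cast; ring

lemma PI.pow (hp : p.Prime) {r : ℕ} {x : ℚ} (hx : PI p r x) (n : ℕ) : PI p (n * r) (x ^ n) := by
  induction n with
  | zero => simpa using PI.one hp
  | succ n ih => rw [pow_succ, Nat.succ_mul]; exact ih.mul hp hx

lemma PI.sum (hp : p.Prime) {r n : ℕ} {f : ℕ → ℚ} (h : ∀ i < n, PI p r (f i)) :
    PI p r (∑ i ∈ range n, f i) := by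
  induction n with
  | zero => simpa using PI.zero hp r
  | succ n ih =>
    rw [sum_range_succ]
    exact (ih fun i hi => h i (by omega)).add hp (h n (by omega))

lemma PI.prod (hp : p.Prime) {n : ℕ} {f : ℕ → ℚ} (h : ∀ i < n, PI p 0 (f i)) :
    PI p 0 (∏ i ∈ range n, f i) := by
  induction n with
  | zero => simpa using PI.one hp
  | succ n ih =>
    rw [prod_range_succ]
    exact (ih fun i hi => h i (by omega)).mul hp (h n (by omega))

lemma PI.self (hp : p.Prime) : PI p 1 (p : ℚ) := by
  obtain ⟨a, b, hb, h⟩ := PI.one hp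
  exact ⟨a, b, hb, by rw [pow_one, ← one_mul (b : ℚ), h]; simp⟩

lemma PI.inv_int {z : ℤ} (hz : ¬ (p : ℤ) ∣ z) : PI p 0 ((z : ℚ)⁻¹) := by
  refine ⟨1, z, hz, ?_⟩
  have : (z : ℚ) ≠ 0 := by
    intro h
    apply hz
    have : z = 0 := by exact_mod_cast h
    simp [this]
  field_simp
  simp

/-- inverse of a perturbed unit -/
lemma PI.inv_add (hp : p.Prime) {x z : ℚ} {r : ℕ} (hz0 : x ≠ 0) (hxi : PI p 0 x⁻¹)
    (hz : PI p (r + 1) z) : x + z ≠ 0 ∧ PI p 0 ((x + z)⁻¹) := by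
  obtain ⟨a, b, hb, h1⟩ := hxi
  obtain ⟨c, d, hd, h2⟩ := hz
  have hb0 : (b : ℚ) ≠ 0 := by
    intro h
    apply hb
    have : b = 0 := by exact_mod_cast h
    simp [this]
  have hd0 : (d : ℚ) ≠ 0 := by
    intro h
    apply hd
    have : d = 0 := by exact_mod_cast h
    simp [this]
  have h1' : (b : ℚ) = x * a := by
    field_simp at h1
    simpa using h1
  have ha : (a : ℚ) ≠ 0 := by
    intro h; rw [h] at h1'; simp at h1'; exact hb0 (by exact_mod_cast h1')
  have key : (x + z) * (a * d) = ((b * d + p ^ (r + 1) * c * a : ℤ) : ℚ) := by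
    push_cast
    rw [h1']
    linear_combination (a : ℚ) * h2
  have hnd : ¬ (p : ℤ) ∣ (b * d + p ^ (r + 1) * c * a) := by
    intro h
    apply not_dvd_mul hp hb hd
    have h3 : (p : ℤ) ∣ p ^ (r + 1) * c * a :=
      Dvd.dvd.mul_right (Dvd.dvd.mul_right (dvd_pow_self _ (by omega)) _) _
    exact (Int.dvd_add_left h3).mp h
  have hne : ((b * d + p ^ (r + 1) * c * a : ℤ) : ℚ) ≠ 0 := by
    intro h
    apply hnd
    have : (b * d + p ^ (r + 1) * c * a : ℤ) = 0 := by exact_mod_cast h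
    rw [this]; simp
  have hne2 : x + z ≠ 0 := by
    intro h; rw [h, zero_mul] at key; exact hne key.symm
  refine ⟨hne2, a * d, _, hnd, ?_⟩
  rw [← key]
  push_cast
  field_simp

/-- products of elements `≡ 1` -/
lemma PI.prod_sub_one (hp : p.Prime) {r n : ℕ} {f : ℕ → ℚ} (h : ∀ i < n, PI p r (f i - 1)) :
    PI p r (∏ i ∈ range n, f i - 1) := by
  induction n with
  | zero => simpa using PI.zero hp r
  | succ n ih =>
    rw [prod_range_succ]
    have h1 := ih fun i hi => h i (by omega)
    have h2 := h n (by omega)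
    have h3 : (∏ i ∈ range n, f i) * f n - 1
      = (∏ i ∈ range n, f i - 1) * (f n - 1) + ((∏ i ∈ range n, f i - 1) + (f n - 1)) := by ring
    rw [h3]
    exact ((h1.mul hp h2).mono (by omega)).add hp (h1.add hp h2)

lemma PI.div_small (hp : p.Prime) {u : ℕ} (h0 : 0 < u) (h1 : u < p ^ 2) :
    PI p 1 ((p : ℚ) ^ 2 / u) := by
  have hp0 : (p : ℚ) ≠ 0 := by exact_mod_cast hp.ne_zero
  have hu0 : (u : ℚ) ≠ 0 := by exact_mod_cast h0.ne'
  by_cases hd : p ∣ u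
  · obtain ⟨v, rfl⟩ := hd
    have hv : ¬ (p : ℤ) ∣ (v : ℤ) := by
      intro h
      have h := Int.natCast_dvd_natCast.mp h
      have := Nat.le_of_dvd h0 (Nat.mul_dvd_mul_left p h)
      nlinarith
    refine ⟨1, v, hv, ?_⟩
    push_cast at hu0 ⊢
    have : (v : ℚ) ≠ 0 := by
      intro h; rw [h] at hu0; simp at hu0
    field_simp
  · refine ⟨p, u, fun h => hd (Int.natCast_dvd_natCast.mp h), ?_⟩
    push_cast
    field_simp

lemma PI.sq_div_small (hp : p.Prime) {u : ℕ} (h0 : 0 < u) (h1 : u < p ^ 2) :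
    PI p 2 ((p : ℚ) ^ 4 / (u : ℚ) ^ 2) := by
  have := (PI.div_small hp h0 h1).pow hp 2
  rw [div_pow, ← pow_mul] at this
  simpa using this

end basics

/-- the ratio `(1/2+x)_k/(1+x)_k` -/
def cc (x : ℚ) (k : ℕ) : ℚ := ∏ j ∈ range k, ((1 / 2 + x + j) / (1 + x + j))

lemma cc_succ (x : ℚ) (k : ℕ) : cc x (k + 1) = cc x k * ((1 / 2 + x + k) / (1 + x + k)) := by
  unfold cc; rw [prod_range_succ]

lemma cc_zero_right (x : ℚ) : cc x 0 = 1 := by simp [cc]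

/-- perturbation factor -/
def bb (N : ℚ) (k : ℕ) : ℚ := ∏ j ∈ range k, (1 - N ^ 2 / ((2 * j + 1 : ℕ) : ℚ) ^ 2)

lemma bb_succ (N : ℚ) (k : ℕ) :
    bb N (k + 1) = bb N k * (1 - N ^ 2 / ((2 * k + 1 : ℕ) : ℚ) ^ 2) := by
  unfold bb; rw [prod_range_succ]

lemma bb_eq_zero (m k : ℕ) (h : m < k) : bb ((2 * m + 1 : ℕ) : ℚ) k = 0 := by
  unfold bb
  apply prod_eq_zero (mem_range.mpr h)
  have : ((2 * m + 1 : ℕ) : ℚ) ≠ 0 := by positivity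
  field_simp
  simp

lemma rf_div (k : ℕ) : risingFactorial (1/2) k / (k.factorial : ℚ) = cc 0 k := by
  induction k with
  | zero => simp [risingFactorial, cc]
  | succ k ih =>
    rw [cc_succ, ← ih]
    unfold risingFactorial
    rw [prod_range_succ, Nat.factorial_succ]
    have : (k.factorial : ℚ) ≠ 0 := by exact_mod_cast k.factorial_ne_zero
    have : (k + 1 : ℚ) ≠ 0 := by positivity
    have : (1 + k : ℚ) ≠ 0 := by positivity
    push_cast
    simp only [add_zero]
    field_simp
    ring

/-! ### The sum of Whipple -/

/-- `(x)_k` like product -/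
def tt (x y : ℚ) (k : ℕ) : ℚ :=
  ∏ j ∈ range k, ((j - x) * (j + y) * (j + 1 / 2) / ((j : ℚ) + 1) ^ 3)

lemma tt_succ (x y : ℚ) (k : ℕ) : tt x y (k + 1) =
    tt x y k * ((k - x) * (k + y) * (k + 1 / 2) / ((k : ℚ) + 1) ^ 3) := by
  unfold tt; rw [prod_range_succ]

lemma tt_rel1 (m : ℚ) (k : ℕ) :
    tt m (m + 1) k * ((m + 1) * (m + 2)) = tt (m + 2) (m + 1) k * ((k - 1 - m) * (k - 2 - m)) := by
  induction k with
  | zero => simp [tt]; ring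
  | succ k ih =>
    rw [tt_succ, tt_succ]
    have : ((k : ℚ) + 1) ≠ 0 := by positivity
    push_cast
    linear_combination (k - m) * (k + (m + 1)) * (k + 1 / 2) / ((k : ℚ) + 1) ^ 3 * ih

lemma tt_rel2 (m : ℚ) (k : ℕ) :
    tt (m + 2) (m + 3) k * ((m + 1) * (m + 2)) =
      tt (m + 2) (m + 1) k * ((m + 1 + k) * (m + 2 + k)) := by
  induction k with
  | zero => simp [tt]
  | succ k ih =>
    rw [tt_succ, tt_succ]
    have : ((k : ℚ) + 1) ≠ 0 := by positivity
    push_cast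
    linear_combination (k - (m + 2)) * (k + (m + 3)) * (k + 1 / 2) / ((k : ℚ) + 1) ^ 3 * ih

lemma tt_tele (m : ℚ) (K : ℕ) :
    ((m + 2) ^ 2 * ∑ k ∈ range K, tt (m + 2) (m + 3) k
      - (m + 1) ^ 2 * ∑ k ∈ range K, tt m (m + 1) k) * ((m + 1) * (m + 2))
    = -2 * (2 * m + 3) * K ^ 3 * tt (m + 2) (m + 1) K := by
  induction K with
  | zero => simp
  | succ k ih =>
    rw [sum_range_succ, sum_range_succ, tt_succ]
    have h1 := tt_rel1 m k
    have h2 := tt_rel2 m k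
    have h3 : ((k : ℚ) + 1) ≠ 0 := by positivity
    have h4 : -2 * (2 * m + 3) * ((k + 1 : ℕ) : ℚ) ^ 3 * (tt (m + 2) (m + 1) k *
        ((k - (m + 2)) * (k + (m + 1)) * (k + 1 / 2) / ((k : ℚ) + 1) ^ 3))
        = -2 * (2 * m + 3) * (tt (m + 2) (m + 1) k *
        ((k - (m + 2)) * (k + (m + 1)) * (k + 1 / 2))) := by
      push_cast
      field_simp
    rw [h4]
    linear_combination ih + (m + 2) ^ 2 * h2 - (m + 1) ^ 2 * h1

lemma tt_zero (m : ℕ) (y : ℚ) (k : ℕ) (h : m < k) : tt m y k = 0 := by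
  unfold tt
  apply prod_eq_zero (mem_range.mpr h)
  simp

lemma tt_rec (m K : ℕ) (hK : m + 2 < K) :
    ((m : ℚ) + 2) ^ 2 * ∑ k ∈ range K, tt (m + 2) (m + 3) k
      = ((m : ℚ) + 1) ^ 2 * ∑ k ∈ range K, tt m (m + 1) k := by
  have h := tt_tele m K
  have h0 : tt ((m : ℚ) + 2) (m + 1) K = 0 := by
    have := tt_zero (m + 2) (m + 1) K hK
    push_cast at this
    exact this
  rw [h0, mul_zero] at h
  have : ((m : ℚ) + 1) * (m + 2) ≠ 0 := by positivity
  rcases mul_eq_zero.mp h with h | h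
  · linarith
  · exact absurd h this

lemma whipple_even (l K : ℕ) (hK : 2 * l < K) :
    ∑ k ∈ range K, tt (2 * l : ℕ) ((2 * l : ℕ) + 1) k = cc 0 l ^ 2 := by
  induction l with
  | zero =>
    obtain ⟨K, rfl⟩ : ∃ t, K = t + 1 := ⟨K - 1, by omega⟩
    rw [sum_range_succ']
    rw [sum_eq_zero]
    · simp [tt, cc]
    · intro i _
      exact tt_zero _ _ _ (by omega)
  | succ l ih =>
    have h := tt_rec (2 * l) K (by omega)
    rw [ih (by omega)] at h
    rw [cc_succ]
    have e : ∀ k, tt (2 * (l + 1) : ℕ) ((2 * (l + 1) : ℕ) + 1) k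
        = tt ((2 * l : ℕ) + 2) ((2 * l : ℕ) + 3) k := by
      intro k
      congr 1 <;> push_cast <;> ring
    rw [sum_congr rfl fun k _ => e k]
    have h1 : ((2 * l : ℕ) + 2 : ℚ) ^ 2 ≠ 0 := by positivity
    apply mul_left_cancel₀ h1
    rw [h]
    have h2 : (1 + l : ℚ) ≠ 0 := by positivity
    push_cast
    simp only [add_zero]
    field_simp
    ring

lemma whipple_odd (l K : ℕ) (hK : 2 * l + 1 < K) :
    ∑ k ∈ range K, tt (2 * l + 1 : ℕ) ((2 * l + 1 : ℕ) + 1) k = 0 := by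
  induction l with
  | zero =>
    obtain ⟨K, rfl⟩ : ∃ t, K = t + 2 := ⟨K - 2, by omega⟩
    rw [sum_range_succ', sum_range_succ']
    rw [sum_eq_zero]
    · norm_num [tt]
    · intro i _
      exact tt_zero _ _ _ (by omega)
  | succ l ih =>
    have h := tt_rec (2 * l + 1) K (by omega)
    rw [ih (by omega)] at h
    have e : ∀ k, tt (2 * (l + 1) + 1 : ℕ) ((2 * (l + 1) + 1 : ℕ) + 1) k
        = tt ((2 * l + 1 : ℕ) + 2) ((2 * l + 1 : ℕ) + 3) k := by
      intro k
      congr 1 <;> push_cast <;> ring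
    rw [sum_congr rfl fun k _ => e k]
    have h1 : ((2 * l + 1 : ℕ) + 2 : ℚ) ^ 2 ≠ 0 := by positivity
    apply mul_left_cancel₀ h1
    rw [h]
    simp

lemma tt_eq (m k : ℕ) : tt m (m + 1) k = cc 0 k ^ 3 * bb ((2 * m + 1 : ℕ) : ℚ) k := by
  induction k with
  | zero => simp [tt, cc, bb]
  | succ k ih =>
    rw [tt_succ, cc_succ, bb_succ, ih]
    have h1 : (k + 1 : ℚ) ≠ 0 := by positivity
    have h3 : (1 + k : ℚ) ≠ 0 := by positivity
    have h2 : (2 * k + 1 : ℚ) ≠ 0 := by positivity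
    push_cast
    simp only [add_zero]
    field_simp
    ring

/-! ### Block sums -/

lemma PI.inv_nat {p : ℕ} {u : ℕ} (h0 : 0 < u) (h1 : u < p) : PI p 0 ((u : ℚ)⁻¹) := by
  have : ¬ (p : ℤ) ∣ (u : ℤ) := by
    intro h
    have := Nat.le_of_dvd h0 (Int.natCast_dvd_natCast.mp h)
    omega
  simpa using PI.inv_int this

lemma PI.half {p : ℕ} (hp2 : 2 < p) : PI p 0 (1 / 2) := by
  simpa using PI.inv_nat (p := p) (u := 2) (by omega) hp2

section blocks
variable {p : ℕ}

lemma PI.pmul (hp : p.Prime) {y : ℚ} (hy : PI p 0 y) : PI p 1 (p * y) := by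
  simpa using (PI.self hp).mul hp hy

lemma den_unit (hp : p.Prime) {y : ℚ} (hy : PI p 0 y) {j : ℕ} (hj : j + 1 < p) :
    1 + p * y + (j : ℚ) ≠ 0 ∧ PI p 0 ((1 + p * y + (j : ℚ))⁻¹) := by
  have h := PI.inv_add hp (x := ((j + 1 : ℕ) : ℚ)) (z := p * y) (r := 0) (by positivity)
    (PI.inv_nat (by omega) hj) (PI.pmul hp hy)
  have e : ((j + 1 : ℕ) : ℚ) + p * y = 1 + p * y + (j : ℚ) := by push_cast; ring
  rwa [e] at h

lemma fac_PI (hp : p.Prime) (hp2 : 2 < p) {y : ℚ} (hy : PI p 0 y) {j : ℕ} (hj : j + 1 < p) :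
    PI p 0 ((1 / 2 + p * y + j) / (1 + p * y + j)) := by
  rw [div_eq_mul_inv]
  exact ((((PI.half hp2).add hp ((PI.pmul hp hy).mono (by omega))).add hp (PI.nat hp j)).mul hp
    (den_unit hp hy hj).2)

lemma cc_PI (hp : p.Prime) (hp2 : 2 < p) {y : ℚ} (hy : PI p 0 y) {k : ℕ} (hk : k < p) :
    PI p 0 (cc (p * y) k) :=
  PI.prod hp fun i hi => fac_PI hp hp2 hy (by omega)

lemma cc_PI_big (hp : p.Prime) (hp2 : 2 < p) {q : ℕ} (hq : p = 2 * q + 1) {y : ℚ} (hy : PI p 0 y)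
    {k : ℕ} (hk : k < p) (hqk : q < k) {r : ℕ} (hr : PI p r (p * ((2 * y + 1) / 2))) :
    PI p r (cc (p * y) k) := by
  unfold cc
  rw [← mul_prod_erase _ _ (mem_range.mpr hqk)]
  have h1 : (1 / 2 + p * y + q : ℚ) = p * ((2 * y + 1) / 2) := by
    rw [hq]; push_cast; ring
  rw [h1, div_eq_mul_inv]
  have h2 : PI p 0 (∏ j ∈ (range k).erase q, ((1 / 2 + p * y + j) / (1 + p * y + j))) := by
    have : ∏ j ∈ (range k).erase q, ((1 / 2 + p * y + j) / (1 + p * y + j) : ℚ)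
        = ∏ j ∈ range k, (if j = q then 1 else ((1 / 2 + p * y + j) / (1 + p * y + j) : ℚ)) := by
      rw [← mul_prod_erase (range k) _ (mem_range.mpr hqk), if_pos rfl, one_mul]
      apply prod_congr rfl
      intro j hj
      rw [if_neg (ne_of_mem_erase hj)]
    rw [this]
    apply PI.prod hp
    intro i hi
    split_ifs
    · exact PI.one hp
    · exact fac_PI hp hp2 hy (by omega)
  exact (hr.mul hp (den_unit hp hy (by omega)).2).mul hp h2

/-- functions that are affine in `p y` modulo `p^2` -/
def Lin (p : ℕ) (f : ℚ → ℚ) : Prop :=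
  ∃ A D, PI p 0 A ∧ PI p 0 D ∧ ∀ y, PI p 0 y → PI p 2 (f y - A - D * (p * y))

lemma Lin.one (hp : p.Prime) : Lin p (fun _ => 1) :=
  ⟨1, 0, PI.one hp, PI.zero hp 0, fun y _ => by simpa using PI.zero hp 2⟩

lemma Lin.add (hp : p.Prime) {f g : ℚ → ℚ} (hf : Lin p f) (hg : Lin p g) :
    Lin p (fun y => f y + g y) := by
  obtain ⟨A, D, hA, hD, h⟩ := hf
  obtain ⟨A', D', hA', hD', h'⟩ := hg
  refine ⟨A + A', D + D', hA.add hp hA', hD.add hp hD', fun y hy => ?_⟩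
  have := (h y hy).add hp (h' y hy)
  convert this using 1
  ring

lemma Lin.mul (hp : p.Prime) {f g : ℚ → ℚ} (hf : Lin p f) (hg : Lin p g) :
    Lin p (fun y => f y * g y) := by
  obtain ⟨A, D, hA, hD, h⟩ := hf
  obtain ⟨A', D', hA', hD', h'⟩ := hg
  refine ⟨A * A', A * D' + A' * D, hA.mul hp hA', (hA.mul hp hD').add hp (hA'.mul hp hD),
    fun y hy => ?_⟩
  have hz := PI.pmul hp hy
  have h1 := h y hy
  have h2 := h' y hy
  have hz0 : PI p 0 ((p : ℚ) * y) := hz.mono (by omega)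
  have e : f y * g y - A * A' - (A * D' + A' * D) * (p * y)
      = (f y - A - D * (p * y)) * ((A' + D' * (p * y)) + (g y - A' - D' * (p * y)))
        + (A + D * (p * y)) * (g y - A' - D' * (p * y)) + (D * D') * ((p * y) * (p * y)) := by
    ring
  rw [e]
  refine PI.add hp (PI.add hp ?_ ?_) ?_
  · exact h1.mul hp ((hA'.add hp (hD'.mul hp hz0)).add hp (h2.mono (by omega)))
  · simpa using (hA.add hp (hD.mul hp hz0)).mul hp h2
  · simpa using (hD.mul hp hD').mul hp (hz.mul hp hz)

lemma Lin.fac (hp : p.Prime) (hp2 : 2 < p) {j : ℕ} (hj : j + 1 < p) :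
    Lin p (fun y => (1 / 2 + p * y + j) / (1 + p * y + j)) := by
  have hu : PI p 0 (((j + 1 : ℕ) : ℚ)⁻¹) := PI.inv_nat (by omega) hj
  have hs : PI p 0 (1 / 2 + (j : ℚ)) := (PI.half hp2).add hp (PI.nat hp j)
  refine ⟨(1 / 2 + j) * ((j + 1 : ℕ) : ℚ)⁻¹,
    (1 / 2) * (((j + 1 : ℕ) : ℚ)⁻¹ * ((j + 1 : ℕ) : ℚ)⁻¹), hs.mul hp hu,
    (PI.half hp2).mul hp (hu.mul hp hu), fun y hy => ?_⟩
  obtain ⟨hne, hi⟩ := den_unit hp hy hj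
  have hz := PI.pmul hp hy
  have hj0 : ((j : ℚ) + 1) ≠ 0 := by positivity
  have e : (1 / 2 + p * y + j) / (1 + p * y + j) - (1 / 2 + j) * ((j + 1 : ℕ) : ℚ)⁻¹
      - (1 / 2) * (((j + 1 : ℕ) : ℚ)⁻¹ * ((j + 1 : ℕ) : ℚ)⁻¹) * (p * y)
      = ((p * y) * (p * y)) * (-(1 / 2) * (((j + 1 : ℕ) : ℚ)⁻¹ * ((j + 1 : ℕ) : ℚ)⁻¹)
        * (1 + p * y + (j : ℚ))⁻¹) := by
    push_cast
    field_simp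
    ring
  rw [e]
  exact (hz.mul hp hz).mul hp (((PI.half hp2).neg.mul hp (hu.mul hp hu)).mul hp hi)

lemma Lin.cc (hp : p.Prime) (hp2 : 2 < p) {k : ℕ} (hk : k < p) :
    Lin p (fun y => cc (p * y) k) := by
  induction k with
  | zero => simpa [cc_zero_right] using Lin.one hp
  | succ k ih =>
    simp only [cc_succ]
    exact (ih (by omega)).mul hp (Lin.fac hp hp2 hk)

lemma Lin.sum (hp : p.Prime) {n : ℕ} {f : ℕ → ℚ → ℚ} (h : ∀ i < n, Lin p (f i)) :
    Lin p (fun y => ∑ i ∈ range n, f i y) := by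
  induction n with
  | zero =>
    exact ⟨0, 0, PI.zero hp 0, PI.zero hp 0, fun y _ => by simpa using PI.zero hp 2⟩
  | succ n ih =>
    simp only [sum_range_succ]
    exact (ih fun i hi => h i (by omega)).add hp (h n (by omega))

lemma F0_zero (hp : p.Prime) {s : ℕ} (hs : p = 4 * s + 3) :
    PI p 2 (∑ k ∈ range (2 * s + 2), cc 0 k ^ 3) := by
  have hp2 : 2 < p := by omega
  have h := whipple_odd s (2 * s + 2) (by omega)
  simp only [tt_eq] at h
  have e : ∑ k ∈ range (2 * s + 2), cc 0 k ^ 3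
      = ∑ k ∈ range (2 * s + 2), (cc 0 k ^ 3 * -(bb ((2 * (2 * s + 1) + 1 : ℕ) : ℚ) k - 1)) := by
    have : ∀ k, cc 0 k ^ 3 * -(bb ((2 * (2 * s + 1) + 1 : ℕ) : ℚ) k - 1)
        = cc 0 k ^ 3 - cc 0 k ^ 3 * bb ((2 * (2 * s + 1) + 1 : ℕ) : ℚ) k := fun k => by ring
    simp only [this]
    rw [sum_sub_distrib, h, sub_zero]
  rw [e]
  apply PI.sum hp
  intro k hk
  have hc : PI p 0 (cc 0 k) := by
    have := cc_PI hp hp2 (PI.zero hp 0) (k := k) (by omega)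
    simpa using this
  have h1 : PI p 2 (bb ((2 * (2 * s + 1) + 1 : ℕ) : ℚ) k - 1) := by
    apply PI.prod_sub_one hp
    intro j hj
    have hpe : 2 * (2 * s + 1) + 1 = p := by omega
    rw [hpe]
    have hi : PI p 0 (((2 * j + 1 : ℕ) : ℚ)⁻¹) := PI.inv_nat (by omega) (by omega)
    have := ((PI.self hp).mul hp hi).pow hp 2
    have e : (1 - (p : ℚ) ^ 2 / ((2 * j + 1 : ℕ) : ℚ) ^ 2) - 1
      = -((p : ℚ) * ((2 * j + 1 : ℕ) : ℚ)⁻¹) ^ 2 := by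
      field_simp
      ring
    rw [e]
    exact this.neg
  simpa using (hc.pow hp 3).mul hp h1.neg

lemma cc_reflect (q k : ℕ) (hk : k ≤ q) (P : ℚ) (hP : P = 2 * q + 1) :
    cc (P * (-(1 / 2))) k * cc 0 q = cc 0 (q - k) := by
  induction k with
  | zero => simp [cc_zero_right]
  | succ k ih =>
    have ih := ih (by omega)
    obtain ⟨t, rfl⟩ : ∃ t, q = k + 1 + t := ⟨q - (k + 1), by omega⟩
    have e1 : k + 1 + t - k = t + 1 := by omega
    have e2 : k + 1 + t - (k + 1) = t := by omega
    rw [e1, cc_succ] at ih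
    rw [e2, cc_succ]
    have hf : (1 / 2 + P * (-(1 / 2)) + k) / (1 + P * (-(1 / 2)) + k) = (t + 1) / (t + 1 / 2 : ℚ) := by
      have e3 : 1 / 2 + P * (-(1 / 2)) + k = -(t + 1 : ℚ) := by rw [hP]; push_cast; ring
      have e4 : 1 + P * (-(1 / 2)) + k = -(t + 1 / 2 : ℚ) := by rw [hP]; push_cast; ring
      rw [e3, e4, neg_div_neg_eq]
    rw [hf, mul_right_comm, ih]
    have h1 : (t + 1 / 2 : ℚ) ≠ 0 := by positivity
    have h2 : (1 / 2 + 0 + t : ℚ) ≠ 0 := by positivity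
    have h3 : (1 + 0 + t : ℚ) ≠ 0 := by positivity
    rw [mul_assoc]
    have : (1 / 2 + 0 + (t : ℚ)) / (1 + 0 + t) * ((t + 1) / (t + 1 / 2)) = 1 := by
      rw [add_zero, add_zero, add_comm (1 / 2 : ℚ), add_comm (1 : ℚ)]
      have : (t + 1 : ℚ) ≠ 0 := by positivity
      rw [div_mul_div_comm, mul_comm]
      exact div_self (mul_ne_zero this h1)
    rw [this, mul_one]

lemma cc_ne_zero (k : ℕ) : cc 0 k ≠ 0 := by
  unfold cc
  apply prod_ne_zero_iff.mpr
  intro j _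
  positivity

lemma cc_inv (hp : p.Prime) {q : ℕ} (hq : p = 2 * q + 1) : PI p 0 ((cc 0 q)⁻¹) := by
  unfold cc
  rw [← prod_inv_distrib]
  apply PI.prod hp
  intro j hj
  have e : ((1 / 2 + 0 + (j : ℚ)) / (1 + 0 + j))⁻¹
      = ((2 * (j + 1) : ℕ) : ℚ) * ((2 * j + 1 : ℕ) : ℚ)⁻¹ := by
    push_cast
    simp only [add_zero]
    have h1 : (1 / 2 + j : ℚ) ≠ 0 := by positivity
    have h2 : (1 + 2 * j : ℚ) ≠ 0 := by positivity
    have h3 : (2 * j + 1 : ℚ) ≠ 0 := by positivity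
    field_simp
    ring
  rw [e]
  exact (PI.nat hp _).mul hp (PI.inv_nat (by omega) (by omega))

lemma F_block (hp : p.Prime) {s : ℕ} (hs : p = 4 * s + 3) {y : ℚ} (hy : PI p 0 y) :
    PI p 2 (∑ k ∈ range p, cc (p * y) k ^ 3) := by
  have hp2 : 2 < p := by omega
  have hl : Lin p (fun y => ∑ k ∈ range (2 * s + 2), (fun k y => cc (p * y) k ^ 3) k y) := by
    apply Lin.sum hp
    intro i hi
    have h := Lin.cc hp hp2 (k := i) (by omega)
    have := (h.mul hp h).mul hp h
    convert this using 2
    ring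
  obtain ⟨A, D, hA, hD, h⟩ := hl
  simp only at h
  have h0 := h 0 (PI.zero hp 0)
  have hF0 := F0_zero hp hs
  simp only [mul_zero, sub_zero] at h0
  have hA2 : PI p 2 A := by
    have := hF0.sub hp h0
    simpa using this
  have hq : p = 2 * (2 * s + 1) + 1 := by omega
  have hFm : PI p 2 (∑ k ∈ range (2 * s + 2), cc (p * (-(1 / 2))) k ^ 3) := by
    have hi := (cc_inv hp hq).pow hp 3
    have e : ∑ k ∈ range (2 * s + 2), cc (p * (-(1 / 2))) k ^ 3
        = (∑ k ∈ range (2 * s + 2), cc 0 k ^ 3) * (cc 0 (2 * s + 1))⁻¹ ^ 3 := by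
      rw [← sum_range_reflect (fun k => cc 0 k ^ 3), sum_mul]
      apply sum_congr rfl
      intro k hk
      have hk := mem_range.mp hk
      have := cc_reflect (2 * s + 1) k (by omega) p (by rw [hq]; push_cast; ring)
      have e2 : 2 * s + 2 - 1 - k = 2 * s + 1 - k := by omega
      rw [e2, ← this, mul_pow, mul_assoc, ← mul_pow, mul_inv_cancel₀ (cc_ne_zero _)]
      simp
    rw [e]
    simpa using hF0.mul hp hi
  have hm := h (-(1 / 2)) (PI.half hp2).neg
  have hDp : PI p 2 (D * p) := by
    have h1 := ((hFm.sub hp hm).sub hp hA2).mul hp (PI.int hp (-2))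
    convert h1 using 1
    push_cast
    ring
  have hlow : PI p 2 (∑ k ∈ range (2 * s + 2), cc (p * y) k ^ 3) := by
    have h1 := ((h y hy).add hp hA2).add hp (hDp.mul hp hy)
    convert h1 using 1
    ring
  have e : p = (2 * s + 2) + (2 * s + 1) := by omega
  have esum : ∑ k ∈ range p, cc (p * y) k ^ 3 = ∑ k ∈ range (2 * s + 2), cc (p * y) k ^ 3
      + ∑ k ∈ range (2 * s + 1), cc (p * y) (2 * s + 2 + k) ^ 3 := by
    rw [← sum_range_add (fun k => cc (p * y) k ^ 3), ← e]
  rw [esum]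
  refine hlow.add hp (PI.sum hp fun k hk => ?_)
  have hr : PI p 1 (p * ((2 * y + 1) / 2)) := by
    apply PI.pmul hp
    have := hy.add hp (PI.half hp2)
    convert this using 1
    ring
  exact ((cc_PI_big hp hp2 hq hy (k := 2 * s + 2 + k) (by omega) (by omega) hr).pow hp 3).mono
    (by omega)

end blocks

/-! ### Assembling -/

lemma cc_central (k : ℕ) : cc 0 k * 4 ^ k = Nat.centralBinom k := by
  induction k with
  | zero => simp [cc]
  | succ k ih =>
    have h := Nat.succ_mul_centralBinom_succ k
    have h' : ((k : ℚ) + 1) * Nat.centralBinom (k + 1) = 2 * (2 * k + 1) * Nat.centralBinom k := by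
      exact_mod_cast h
    have h1 : ((k : ℚ) + 1) ≠ 0 := by positivity
    have h2 : (1 + (k : ℚ)) ≠ 0 := by positivity
    apply mul_left_cancel₀ h1
    rw [h', ← ih, cc_succ]
    simp only [add_zero]
    field_simp
    ring

section assemble
variable {p : ℕ}

lemma four_pow (hp : p.Prime) (hp2 : 2 < p) (k : ℕ) : ¬ (p : ℤ) ∣ (4 : ℤ) ^ k := by
  intro h
  have h1 : p ∣ 4 ^ k := by exact_mod_cast h
  have h2 : p ∣ 2 ^ 2 := hp.dvd_of_dvd_pow h1
  have h3 : p ∣ 2 := hp.dvd_of_dvd_pow h2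
  have := Nat.le_of_dvd (by omega) h3
  omega

lemma cc0_PI (hp : p.Prime) (hp2 : 2 < p) (k : ℕ) : PI p 0 (cc 0 k) :=
  ⟨Nat.centralBinom k, 4 ^ k, four_pow hp hp2 k, by
    push_cast; rw [cc_central]; simp⟩

lemma cc0_PI_one (hp : p.Prime) (hp2 : 2 < p) {k : ℕ} (h : p ∣ Nat.centralBinom k) :
    PI p 1 (cc 0 k) := by
  obtain ⟨c, hc⟩ := h
  exact ⟨c, 4 ^ k, four_pow hp hp2 k, by
    push_cast; rw [cc_central, hc]; simp⟩

lemma dvd_central (hp : p.Prime) {k : ℕ} (h : (2 * k) % p < k % p) : p ∣ Nat.centralBinom k := by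
  have := Fact.mk hp
  have h1 := Choose.choose_modEq_choose_mod_mul_choose_div_nat (n := 2 * k) (k := k) (p := p)
  rw [Nat.choose_eq_zero_of_lt h, zero_mul] at h1
  exact (Nat.modEq_zero_iff_dvd).mp h1

lemma dvd_central_mul (hp : p.Prime) {k : ℕ} (h : p ∣ Nat.centralBinom k) :
    p ∣ Nat.centralBinom (k * p) := by
  have := Fact.mk hp
  have h1 := Choose.choose_modEq_choose_mod_mul_choose_div_nat (n := 2 * (k * p)) (k := k * p)
    (p := p)
  rw [← mul_assoc, Nat.mul_mod_left, Nat.mul_mod_left, Nat.mul_div_cancel _ hp.pos,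
    Nat.mul_div_cancel _ hp.pos, Nat.choose_self, one_mul] at h1
  apply (Nat.modEq_zero_iff_dvd).mp
  unfold Nat.centralBinom
  rw [← mul_assoc]
  exact h1.trans ((Nat.modEq_zero_iff_dvd).mpr h)

lemma cc_split (p k1 k0 : ℕ) : cc 0 (k1 * p + k0) = cc 0 (k1 * p) * cc (p * (k1 : ℚ)) k0 := by
  unfold cc
  rw [prod_range_add]
  congr 1
  apply prod_congr rfl
  intro j _
  push_cast
  congr 1 <;> ring

lemma bb_split (N : ℚ) (a k0 : ℕ) : bb N (a + k0)
    = bb N a * ∏ j ∈ range k0, (1 - N ^ 2 / ((2 * (a + j) + 1 : ℕ) : ℚ) ^ 2) := by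
  unfold bb
  rw [prod_range_add]

lemma bb_sub_one (hp : p.Prime) {k : ℕ} (hk : 2 * k ≤ p ^ 2) :
    PI p 2 (bb ((p : ℚ) ^ 2) k - 1) := by
  apply PI.prod_sub_one hp
  intro j hj
  have := PI.sq_div_small hp (u := 2 * j + 1) (by omega) (by omega)
  convert this.neg using 1
  ring

lemma bb_diff (hp : p.Prime) {q : ℕ} (hq : p = 2 * q + 1) {k1 k0 : ℕ} (hk1 : k1 ≤ q)
    (hk0 : k0 ≤ q) :
    PI p 4 (bb ((p : ℚ) ^ 2) (k1 * p) - bb ((p : ℚ) ^ 2) (k1 * p + k0)) := by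
  rw [bb_split]
  have h1 : PI p 0 (bb ((p : ℚ) ^ 2) (k1 * p)) := by
    have h := bb_sub_one hp (k := k1 * p) (by rw [hq]; nlinarith)
    simpa using (h.mono (Nat.zero_le 2)).add hp (PI.one hp)
  have h2 : PI p 4 (∏ j ∈ range k0,
      (1 - ((p : ℚ) ^ 2) ^ 2 / ((2 * (k1 * p + j) + 1 : ℕ) : ℚ) ^ 2) - 1) := by
    apply PI.prod_sub_one hp
    intro j hj
    have hnd : ¬ (p : ℤ) ∣ ((2 * (k1 * p + j) + 1 : ℕ) : ℤ) := by
      intro h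
      have h := Int.natCast_dvd_natCast.mp h
      have e : 2 * (k1 * p + j) + 1 = p * (2 * k1) + (2 * j + 1) := by ring
      rw [e] at h
      have := Nat.le_of_dvd (by omega) ((Nat.dvd_add_right (Dvd.intro _ rfl)).mp h)
      omega
    have hi := (PI.inv_int hnd).pow hp 2
    have := ((PI.self hp).pow hp 4).mul hp hi
    convert this.neg using 1
    push_cast
    field_simp
    ring
  have := h1.mul hp h2.neg
  convert this using 1
  ring

lemma block_PI (hp : p.Prime) {s : ℕ} (hs : p = 4 * s + 3) {k1 : ℕ} (hk1 : k1 < p) :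
    PI p 4 (∑ k0 ∈ range p,
      cc 0 (k1 * p + k0) ^ 3 * (1 - bb ((p : ℚ) ^ 2) (k1 * p + k0))) := by
  have hp2 : 2 < p := by omega
  obtain ⟨q, hqs⟩ : ∃ q, q = 2 * s + 1 := ⟨_, rfl⟩
  have hq : p = 2 * q + 1 := by omega
  have hm : p ^ 2 = 2 * (2 * (q * q + q)) + 1 := by rw [hq]; ring
  have hz : ∀ k, 2 * (q * q + q) < k → bb ((p : ℚ) ^ 2) k = 0 := by
    intro k hk
    have := bb_eq_zero _ k hk
    rw [← hm] at this
    push_cast at this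
    exact this
  have e : ∑ k0 ∈ range p, cc 0 (k1 * p + k0) ^ 3 * (1 - bb ((p : ℚ) ^ 2) (k1 * p + k0))
      = (cc 0 (k1 * p) ^ 3 * (1 - bb ((p : ℚ) ^ 2) (k1 * p))) * ∑ k0 ∈ range p, cc (p * (k1 : ℚ)) k0 ^ 3
        + cc 0 (k1 * p) ^ 3 * ∑ k0 ∈ range p, cc (p * (k1 : ℚ)) k0 ^ 3 *
          (bb ((p : ℚ) ^ 2) (k1 * p) - bb ((p : ℚ) ^ 2) (k1 * p + k0)) := by
    rw [mul_sum, mul_sum, ← sum_add_distrib]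
    apply sum_congr rfl
    intro k0 _
    rw [cc_split]
    ring
  rw [e]
  have hy : PI p 0 (k1 : ℚ) := PI.nat hp k1
  have ha := (cc0_PI hp hp2 (k1 * p)).pow hp 3
  have hF := F_block hp hs hy
  have hr1 : PI p 1 (p * ((2 * (k1 : ℚ) + 1) / 2)) := by
    apply PI.pmul hp
    have := hy.add hp (PI.half hp2)
    convert this using 1
    ring
  refine PI.add hp ?_ ?_
  · have h1 : PI p 2 (cc 0 (k1 * p) ^ 3 * (1 - bb ((p : ℚ) ^ 2) (k1 * p))) := by
      by_cases hk : k1 ≤ q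
      · have h := (bb_sub_one hp (k := k1 * p) (by rw [hq]; nlinarith)).neg
        rw [neg_sub] at h
        simpa using ha.mul hp h
      · rw [hz (k1 * p) (by rw [hq]; nlinarith), sub_zero, mul_one]
        have hd : p ∣ Nat.centralBinom (k1 * p) := by
          apply dvd_central_mul hp
          apply dvd_central hp
          rw [Nat.mod_eq_of_lt hk1, Nat.mod_eq_sub_mod (by omega), Nat.mod_eq_of_lt (by omega)]
          omega
        exact ((cc0_PI_one hp hp2 hd).pow hp 3).mono (by omega)
    exact h1.mul hp hF
  · have h2 : PI p 4 (∑ k0 ∈ range p, cc (p * (k1 : ℚ)) k0 ^ 3 *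
          (bb ((p : ℚ) ^ 2) (k1 * p) - bb ((p : ℚ) ^ 2) (k1 * p + k0))) := by
      apply PI.sum hp
      intro k0 hk0
      have hc := (cc_PI hp hp2 hy hk0).pow hp 3
      rcases lt_trichotomy k1 q with hlt | heq | hgt
      · by_cases hk : k0 ≤ q
        · simpa using hc.mul hp (bb_diff hp hq hlt.le hk)
        · have h3 := (cc_PI_big hp hp2 hq hy hk0 (by omega) hr1).pow hp 3
          have h4 := bb_sub_one hp (k := k1 * p) (by rw [hq]; nlinarith)
          have h5 := bb_sub_one hp (k := k1 * p + k0) (by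
            have : (k1 + 1) * p ≤ q * p := Nat.mul_le_mul_right _ hlt
            rw [hm]; rw [hq] at this hk0 ⊢; nlinarith)
          have h6 := (h3.mul hp (h4.sub hp h5)).mono (show 4 ≤ 3 * 1 + 2 by omega)
          convert h6 using 1
          ring
      · by_cases hk : k0 ≤ q
        · simpa using hc.mul hp (bb_diff hp hq heq.le hk)
        · have hr2 : PI p 2 (p * ((2 * (k1 : ℚ) + 1) / 2)) := by
            have h7 := ((PI.self hp).mul hp (PI.self hp)).mul hp (PI.half hp2)
            convert h7 using 1
            rw [heq, hq]
            push_cast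
            ring
          have h3 := (cc_PI_big hp hp2 hq hy hk0 (by omega) hr2).pow hp 3
          rw [hz (k1 * p + k0) (by rw [heq, hq]; nlinarith), sub_zero]
          have h4 : PI p 0 (bb ((p : ℚ) ^ 2) (k1 * p)) := by
            have h := bb_sub_one hp (k := k1 * p) (by rw [heq, hq]; nlinarith)
            simpa using (h.mono (Nat.zero_le 2)).add hp (PI.one hp)
          exact (h3.mul hp h4).mono (by omega)
      · rw [hz (k1 * p + k0) (by rw [hq]; nlinarith), hz (k1 * p) (by rw [hq]; nlinarith)]
        simpa using PI.zero hp 4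
    simpa using ha.mul hp h2

lemma sum_blocks (f : ℕ → ℚ) (K p : ℕ) :
    ∑ k ∈ range (K * p), f k = ∑ k1 ∈ range K, ∑ k0 ∈ range p, f (k1 * p + k0) := by
  induction K with
  | zero => simp
  | succ K ih => rw [Nat.succ_mul, sum_range_add, ih, sum_range_succ]

lemma sum_diff (hp : p.Prime) {s : ℕ} (hs : p = 4 * s + 3) {l : ℕ} (hl : p ^ 2 = 4 * l + 1) :
    PI p 4 (∑ k ∈ range (p ^ 2), cc 0 k ^ 3 - cc 0 l ^ 2) := by
  have h := whipple_even l (p ^ 2) (by omega)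
  simp only [tt_eq] at h
  have e : 2 * (2 * l) + 1 = p ^ 2 := by omega
  rw [e] at h
  push_cast at h
  rw [← h, ← sum_sub_distrib, sq, sum_blocks]
  apply PI.sum hp
  intro k1 hk1
  have := block_PI hp hs hk1
  convert this using 2
  ring

lemma prod_id (l : ℕ) (n : ℚ) (hn : n = 4 * l + 1) :
    n * ∏ k ∈ Icc (1 : ℕ) (2 * l), ((4 * (k : ℚ) - 1) / (4 * (k : ℚ) + 1))
      = ∏ j ∈ range l, ((n ^ 2 - (4 * j + 2) ^ 2) / (n ^ 2 - (4 * j + 4) ^ 2)) := by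
  have e0 : ∏ k ∈ Icc (1 : ℕ) (2 * l), ((4 * (k : ℚ) - 1) / (4 * (k : ℚ) + 1))
      = ∏ k ∈ range (2 * l), ((4 * (k : ℚ) + 3) / (4 * (k : ℚ) + 5)) := by
    rw [← Finset.Ico_add_one_right_eq_Icc, prod_Ico_eq_prod_range]
    apply prod_congr (by simp)
    intro k _
    push_cast
    congr 1 <;> ring
  rw [e0, prod_div_distrib, prod_div_distrib]
  have hN : ∏ k ∈ range (2 * l), (4 * (k : ℚ) + 3) = ∏ j ∈ range l, (n ^ 2 - (4 * j + 2) ^ 2) := by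
    rw [two_mul, prod_range_add, ← prod_range_reflect, ← prod_mul_distrib]
    apply prod_congr rfl
    intro j hj
    obtain ⟨t, rfl⟩ : ∃ t, l = j + 1 + t := ⟨l - (j + 1), by have := mem_range.mp hj; omega⟩
    have : j + 1 + t - 1 - j = t := by omega
    rw [this, hn]
    push_cast
    ring
  have hD : ∏ k ∈ range (2 * l), (4 * (k : ℚ) + 5)
      = n * ∏ j ∈ range l, (n ^ 2 - (4 * j + 4) ^ 2) := by
    have h1 : ∏ k ∈ range (2 * l + 1), (4 * (k : ℚ) + 1) = ∏ k ∈ range (2 * l), (4 * (k : ℚ) + 5) := by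
      rw [prod_range_succ']
      simp only [Nat.cast_zero, mul_zero, zero_add, mul_one]
      apply prod_congr rfl
      intro k _
      push_cast
      ring
    have h2 : 2 * l + 1 = l + (l + 1) := by ring
    rw [← h1, h2, prod_range_add, prod_range_succ', ← prod_range_reflect, ← mul_assoc,
      ← prod_mul_distrib, mul_comm]
    congr 1
    · rw [hn]; push_cast; ring
    · apply prod_congr rfl
      intro j hj
      obtain ⟨t, rfl⟩ : ∃ t, l = j + 1 + t := ⟨l - (j + 1), by have := mem_range.mp hj; omega⟩
      have : j + 1 + t - 1 - j = t := by omega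
      rw [this, hn]
      push_cast
      ring
  have hn0 : n ≠ 0 := by rw [hn]; positivity
  rw [hN, hD, ← mul_div_assoc, mul_div_mul_left _ _ hn0]

lemma prod_diff (hp : p.Prime) {s : ℕ} (hs : p = 4 * s + 3) {l : ℕ} (hl : p ^ 2 = 4 * l + 1) :
    PI p 4 (cc 0 l ^ 2 - (p : ℚ) ^ 2 *
      ∏ k ∈ Icc (1 : ℕ) (2 * l), ((4 * (k : ℚ) - 1) / (4 * (k : ℚ) + 1))) := by
  have hp2 : 2 < p := by omega
  rw [prod_id l ((p : ℚ) ^ 2) (by exact_mod_cast hl)]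
  have hd : PI p 1 (cc 0 l) := by
    apply cc0_PI_one hp hp2
    apply dvd_central hp
    have hl' : l = 4 * s ^ 2 + 6 * s + 2 := by rw [hs] at hl; nlinarith
    have e1 : l = (3 * s + 2) + p * s := by rw [hl', hs]; ring
    have e2 : 2 * l = (2 * s + 1) + p * (2 * s + 1) := by rw [hl', hs]; ring
    rw [e2, e1, Nat.add_mul_mod_self_left, Nat.add_mul_mod_self_left, Nat.mod_eq_of_lt (by omega),
      Nat.mod_eq_of_lt (by omega)]
    omega
  have hu : ∀ u : ℕ, 0 < u → u < p ^ 2 → (1 - (p : ℚ) ^ 4 / (u : ℚ) ^ 2 ≠ 0 ∧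
      PI p 0 ((1 - (p : ℚ) ^ 4 / (u : ℚ) ^ 2)⁻¹)) := by
    intro u h0 h1
    have := PI.inv_add hp (x := 1) (r := 1) one_ne_zero (by simpa using PI.one hp)
      (PI.sq_div_small hp h0 h1).neg
    rwa [← sub_eq_add_neg] at this
  have e : ∏ j ∈ range l, ((((p : ℚ) ^ 2) ^ 2 - (4 * j + 2) ^ 2) / (((p : ℚ) ^ 2) ^ 2 - (4 * j + 4) ^ 2))
      = cc 0 l ^ 2 * ∏ j ∈ range l, ((1 - (p : ℚ) ^ 4 / ((4 * j + 2 : ℕ) : ℚ) ^ 2) *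
        (1 - (p : ℚ) ^ 4 / ((4 * j + 4 : ℕ) : ℚ) ^ 2)⁻¹) := by
    unfold cc
    rw [← prod_pow, ← prod_mul_distrib]
    apply prod_congr rfl
    intro j hj
    have hj := mem_range.mp hj
    have h1 := (hu (4 * j + 4) (by omega) (by omega)).1
    have h2 : ((4 * j + 2 : ℕ) : ℚ) ≠ 0 := by positivity
    have h3 : ((4 * j + 4 : ℕ) : ℚ) ≠ 0 := by positivity
    have e1 : ((p : ℚ) ^ 2) ^ 2 - (4 * j + 2) ^ 2
        = -((4 * j + 2 : ℕ) : ℚ) ^ 2 * (1 - (p : ℚ) ^ 4 / ((4 * j + 2 : ℕ) : ℚ) ^ 2) := by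
      field_simp
      push_cast
      ring
    have e2 : ((p : ℚ) ^ 2) ^ 2 - (4 * j + 4) ^ 2
        = -((4 * j + 4 : ℕ) : ℚ) ^ 2 * (1 - (p : ℚ) ^ 4 / ((4 * j + 4 : ℕ) : ℚ) ^ 2) := by
      field_simp
      push_cast
      ring
    have e3 : (1 / 2 + 0 + (j : ℚ)) / (1 + 0 + j) = ((4 * j + 2 : ℕ) : ℚ) / ((4 * j + 4 : ℕ) : ℚ) := by
      have : (1 + (j : ℚ)) ≠ 0 := by positivity
      rw [div_eq_div_iff (by positivity) h3]
      push_cast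
      ring
    rw [e1, e2, e3, mul_div_mul_comm, neg_div_neg_eq, div_pow, div_eq_mul_inv (1 - _)]
  rw [e]
  have h1 : PI p 2 (∏ j ∈ range l, ((1 - (p : ℚ) ^ 4 / ((4 * j + 2 : ℕ) : ℚ) ^ 2) *
        (1 - (p : ℚ) ^ 4 / ((4 * j + 4 : ℕ) : ℚ) ^ 2)⁻¹) - 1) := by
    apply PI.prod_sub_one hp
    intro j hj
    obtain ⟨hne, hi⟩ := hu (4 * j + 4) (by omega) (by omega)
    have h2 := PI.sq_div_small hp (u := 4 * j + 2) (by omega) (by omega)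
    have h3 := PI.sq_div_small hp (u := 4 * j + 4) (by omega) (by omega)
    have h4 := (h3.sub hp h2).mul hp hi
    convert h4 using 1
    have h5 := mul_inv_cancel₀ hne
    linear_combination h5
  have := (hd.pow hp 2).mul hp h1.neg
  convert this using 1
  ring

end assemble

/-- For a prime `p ≡ 3 (mod 4)`,
`∑_{k=0}^{p^2-1} (1/2)_k^3/k!^3 ≡ p^2 ∏_{k=1}^{(p^2-1)/2} (4k-1)/(4k+1) (mod p^4)`. -/
theorem stmt8 (p : ℕ) (hp : p.Prime) (h : p % 4 = 3) :
    ∃ a b : ℤ, ¬ ((p : ℤ) ∣ b) ∧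
      ((∑ k ∈ Finset.range (p ^ 2),
          risingFactorial (1/2) k ^ 3 / (k.factorial : ℚ) ^ 3)
        - (p : ℚ) ^ 2 * ∏ k ∈ Finset.Icc (1 : ℕ) ((p ^ 2 - 1) / 2),
            ((4 * (k : ℚ) - 1) / (4 * (k : ℚ) + 1))) * (b : ℚ)
      = (p : ℚ) ^ 4 * (a : ℚ) := by
  obtain ⟨s, hs⟩ : ∃ s, p = 4 * s + 3 := ⟨p / 4, by omega⟩
  obtain ⟨l, hl⟩ : ∃ l, p ^ 2 = 4 * l + 1 := ⟨4 * s ^ 2 + 6 * s + 2, by rw [hs]; ring⟩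
  have e : (p ^ 2 - 1) / 2 = 2 * l := by omega
  rw [e]
  simp only [← div_pow, rf_div]
  have := (sum_diff hp hs hl).add hp (prod_diff hp hs hl)
  rw [sub_add_sub_cancel] at this
  exact this
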